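/- For all n ≥ 2, (1/(16·2^{1/5})) · n^{3/5} ≤ t^(2)(n) ≤ (e/2^{1/3}) · n^{2/3}; that is, every ordered 2-matching of size n contains twins of size at least (1/(16·2^{1/5}))·n^{3/5}, and there exists an ordered 2-matching of size n with no twins of size exceeding (e/2^{1/3})·n^{2/3}. -/

import Mathlib

/-- A (sub-)matching: a finite set of pairwise disjoint `r`-element subsets
("edges") of the linearly ordered vertex set `ℕ`. -/
def IsMatching (r : ℕ) (M : Finset (Finset ℕ)) : Prop :=
  (∀ e ∈ M, e.card = r) ∧ ∀ e ∈ M, ∀ f ∈ M, e ≠ f → Disjoint e f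

/-- The vertex support of a matching: the union of its edges. -/
def mSupport (M : Finset (Finset ℕ)) : Finset ℕ := M.sup id

/-- An ordered `r`-matching of size `n`: `n` pairwise disjoint `r`-element edges
partitioning `[rn] = {1, …, rn}`. -/
def IsOrderedMatching (r n : ℕ) (M : Finset (Finset ℕ)) : Prop :=
  IsMatching r M ∧ M.card = n ∧ mSupport M = Finset.Icc 1 (r * n)

/-- Two ordered matchings are isomorphic if some (equivalently, the unique)
order-preserving bijection between their vertex supports maps edges onto edges. -/
def MatchIso (M N : Finset (Finset ℕ)) : Prop :=
  ∃ f : ℕ → ℕ, Set.BijOn f (mSupport M : Set ℕ) (mSupport N : Set ℕ) ∧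
    (∀ x ∈ mSupport M, ∀ y ∈ mSupport M, x < y → f x < f y) ∧
    N = M.image fun e => e.image f

/-- `M` contains twins of size `k`: a pair of vertex-disjoint isomorphic
sub-matchings of `M`, each with `k` edges. -/
def HasTwins (M : Finset (Finset ℕ)) (k : ℕ) : Prop :=
  ∃ M₁ M₂ : Finset (Finset ℕ), M₁ ⊆ M ∧ M₂ ⊆ M ∧
    Disjoint (mSupport M₁) (mSupport M₂) ∧ MatchIso M₁ M₂ ∧
    M₁.card = k ∧ M₂.card = k

/-- `t(M)`: the maximum size of twins in `M`. -/
noncomputable def twinMax (M : Finset (Finset ℕ)) : ℕ := sSup {k | HasTwins M k}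

/-- `t^(r)(n)`: the minimum of `t(M)` over all ordered `r`-matchings of size `n`. -/
noncomputable def minTwins (r n : ℕ) : ℕ :=
  sInf {t | ∃ M, IsOrderedMatching r n M ∧ twinMax M = t}

/-- A permutation `π` of `[n]` has twins of length `k`: two order-isomorphic
subsequences occupying disjoint sets of positions. -/
def PermTwins {n : ℕ} (π : Equiv.Perm (Fin n)) (k : ℕ) : Prop :=
  ∃ a b : Fin k → Fin n, StrictMono a ∧ StrictMono b ∧
    (∀ i j, a i ≠ b j) ∧ ∀ i j, (π (a i) < π (a j) ↔ π (b i) < π (b j))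

/-- `τ(n)`: the largest `k` such that every permutation of `[n]` has twins of length `k`. -/
noncomputable def permTau (n : ℕ) : ℕ :=
  sSup {k | ∀ π : Equiv.Perm (Fin n), PermTwins π k}

/-- An `r`-pattern, represented by its canonical representative: an ordered
`r`-matching of size `2` (on the vertex set `[2r]`). Every isomorphism class of
ordered `r`-matchings of size `2` contains exactly one such representative. -/
def IsPattern (r : ℕ) (P : Finset (Finset ℕ)) : Prop := IsOrderedMatching r 2 P

/-- A `P`-clique: a matching all of whose pairs of (distinct) edges form the pattern `P`. -/
def IsPClique (P M : Finset (Finset ℕ)) : Prop :=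
  ∀ e ∈ M, ∀ f ∈ M, e ≠ f → MatchIso {e, f} P

/-- `L(M)`: the size of the largest sub-matching of `M` that is a `P`-clique,
over all `r`-patterns `P`. -/
noncomputable def cliqueMax (r : ℕ) (M : Finset (Finset ℕ)) : ℕ :=
  sSup {k | ∃ P, IsPattern r P ∧ ∃ M' ⊆ M, IsPClique P M' ∧ M'.card = k}

/-- `L_r(n)`: the minimum of `L(M)` over all ordered `r`-matchings of size `n`. -/
noncomputable def minClique (r n : ℕ) : ℕ :=
  sInf {l | ∃ M, IsOrderedMatching r n M ∧ cliqueMax r M = l}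

/-
Upper bound. Number the `2n` endpoints of `n` edges at random. A candidate for twins of size `k`
consists of `k` edges, their partners and the orientations of the partners, so there are at most
`(n choose k) (2n)^k` candidates. Each is realised with probability at most `1/(2k)!`, because at
most one rearrangement of the `2k` values on the first twin matches the order on the second. Hence
some matching has no twins of size `k` as soon as `(2n²)^k < k! (2k)!`.

Lower bound. Cut the vertex set at a point. Twins among the edges to the left of the cut and twins
among the edges to the right of it can be united, so a balanced cut allows induction unless a fixed
proportion of the edges cross it. Crossing edges are points of the plane, given by their left and
right endpoints, and only the two coordinatewise orders matter. To find `T ≈ N^(3/5)` pairs among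
`N` points, cut the plane into vertical blocks and `4T` horizontal rows. While fewer than `T` pairs
have been found, some block not used so far has more than `9T` points in at most `3T` unused rows,
and hence contains `T` triples which each lie in one row and are separated from one another
vertically. Given two such triples, at two cyclically consecutive indices the abscissas compare in
the same way. So one of three strict orders has a chain of more than `T^(1/3)` triples, and the two
consecutive points of its triples are new pairs. Partners share their block and their row, which
makes the new pairs compatible with the earlier ones.
-/

section

open Finset
open scoped Nat Function

variable {α β γ ι κ : Type*}

/-- The edge with endpoints `g a false` and `g a true`; here `a` is a label of the edge. -/
def edgeOf [DecidableEq β] (g : α → Bool → β) (a : α) : Finset β := univ.image (g a)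

/-- The ways of comparing edges labelled by `α`: `endpointLT g (s, t)` compares the endpoint `s` of
one edge with the endpoint `t` of the other. -/
def endpointLT [LT β] (g : α → Bool → β) : Bool × Bool → α → α → Prop :=
  fun i a b ↦ g a i.1 < g b i.2

/-- Two pairs that can occur together in a twin pairing: their first components compare under each
relation `R i` in the same way as their second components, and no element is used on both sides. -/
def TwinCompatible (R : κ → α → α → Prop) (p q : α × α) : Prop :=
  (∀ i, R i p.1 q.1 ↔ R i p.2 q.2) ∧ p.1 ≠ q.2

/-- `W` encodes twins inside `S` as a set of pairs of corresponding elements: the first components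
form one twin, the second components the other. -/
def IsTwinPairing (R : κ → α → α → Prop) (S : Finset α) (W : Finset (α × α)) : Prop :=
  (∀ w ∈ W, w.1 ∈ S ∧ w.2 ∈ S) ∧ ∀ w ∈ W, ∀ w' ∈ W, TwinCompatible R w w'

lemma mem_edgeOf [DecidableEq β] {g : α → Bool → β} {a : α} {x : β} :
    x ∈ edgeOf g a ↔ ∃ s, g a s = x := by
  simp only [edgeOf, mem_image, mem_univ, true_and]

lemma apply_mem_edgeOf [DecidableEq β] (g : α → Bool → β) (a : α) (s : Bool) :
    g a s ∈ edgeOf g a :=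
  mem_edgeOf.2 ⟨s, rfl⟩

lemma eq_of_apply_eq_apply [DecidableEq β] {g : α → Bool → β} {S : Set α}
    (hg : S.PairwiseDisjoint (edgeOf g)) {a b : α} (ha : a ∈ S) (hb : b ∈ S) {s t : Bool}
    (h : g a s = g b t) : a = b :=
  hg.elim_finset ha hb _ (apply_mem_edgeOf g a s) (h ▸ apply_mem_edgeOf g b t)

lemma mem_mSupport {M : Finset (Finset ℕ)} {x : ℕ} : x ∈ mSupport M ↔ ∃ e ∈ M, x ∈ e := by
  simp only [mSupport, mem_sup, id_eq]

lemma mem_mSupport_image_edgeOf {W : Finset α} {u : α → Bool → ℕ} {x : ℕ} :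
    x ∈ mSupport (W.image (edgeOf u)) ↔ ∃ a ∈ W, ∃ s, u a s = x := by
  simp only [mem_mSupport, exists_mem_image, mem_edgeOf]

lemma matchIso_image_edgeOf {W : Finset α} {u v : α → Bool → ℕ}
    (h : ∀ a ∈ W, ∀ b ∈ W, ∀ s t, u a s < u b t ↔ v a s < v b t) :
    MatchIso (W.image (edgeOf u)) (W.image (edgeOf v)) := by
  have well_defined (x : ℕ) : ∃ y, ∀ a ∈ W, ∀ s, u a s = x → v a s = y := by
    by_cases hx : ∃ b ∈ W, ∃ t, u b t = x
    · obtain ⟨b, hb, t, rfl⟩ := hx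
      refine ⟨v b t, fun a ha s has ↦ le_antisymm ?_ ?_⟩
      · exact le_of_not_gt fun hlt ↦ ((h b hb a ha t s).2 hlt).ne' has
      · exact le_of_not_gt fun hlt ↦ ((h a ha b hb s t).2 hlt).ne has
    · exact ⟨0, fun a ha s has ↦ (hx ⟨a, ha, s, has⟩).elim⟩
  choose f hf' using well_defined
  have hf {a : α} (ha : a ∈ W) (s : Bool) : f (u a s) = v a s := (hf' _ a ha s rfl).symm
  have hmono : StrictMonoOn f (mSupport (W.image (edgeOf u))) := by
    intro x hx y hy hxy
    obtain ⟨a, ha, s, rfl⟩ := mem_mSupport_image_edgeOf.1 hx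
    obtain ⟨b, hb, t, rfl⟩ := mem_mSupport_image_edgeOf.1 hy
    rw [hf ha, hf hb]
    exact (h a ha b hb s t).1 hxy
  refine ⟨f, ⟨fun x hx ↦ ?_, hmono.injOn, fun y hy ↦ ?_⟩, fun x hx y hy ↦ hmono hx hy, ?_⟩
  · obtain ⟨a, ha, s, rfl⟩ := mem_mSupport_image_edgeOf.1 hx
    exact mem_mSupport_image_edgeOf.2 ⟨a, ha, s, (hf ha s).symm⟩
  · obtain ⟨a, ha, s, rfl⟩ := mem_mSupport_image_edgeOf.1 hy
    exact ⟨u a s, mem_mSupport_image_edgeOf.2 ⟨a, ha, s, rfl⟩, hf ha s⟩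
  · rw [image_image]
    refine image_congr fun a ha ↦ ?_
    rw [Function.comp_apply, edgeOf, edgeOf, image_image]
    exact image_congr fun s _ ↦ (hf ha s).symm

lemma isMatching_image_edgeOf {S : Finset α} {g : α → Bool → ℕ}
    (hne : ∀ a ∈ S, g a false ≠ g a true) (hg : (S : Set α).PairwiseDisjoint (edgeOf g)) :
    IsMatching 2 (S.image (edgeOf g)) := by
  refine ⟨forall_mem_image.2 fun a ha ↦ ?_, forall_mem_image.2 fun a ha ↦
    forall_mem_image.2 fun b hb hab ↦ hg ha hb (ne_of_apply_ne _ hab)⟩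
  rw [edgeOf, card_image_of_injective _ (Bool.injective_iff.2 (hne a ha)), card_univ,
    Fintype.card_bool]

lemma IsMatching.exists_endpoints {M : Finset (Finset ℕ)} (hM : IsMatching 2 M) :
    ∃ g : Finset ℕ → Bool → ℕ, ∀ e ∈ M, g e false < g e true ∧ edgeOf g e = e := by
  have endpoints (e : Finset ℕ) : ∃ p : Bool → ℕ, e ∈ M → p false < p true ∧ univ.image p = e := by
    by_cases he : e ∈ M
    · obtain ⟨x, y, hxy, rfl⟩ := card_eq_two.1 (hM.1 e he)
      refine ⟨fun s ↦ bif s then max x y else min x y, fun _ ↦ ⟨min_lt_max.2 hxy, ?_⟩⟩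
      rcases le_total x y with h | h <;> simp [h, pair_comm]
    · exact ⟨0, fun h ↦ (he h).elim⟩
  choose g hg using endpoints
  exact ⟨g, hg⟩

lemma IsTwinPairing.hasTwins {g : α → Bool → ℕ} {S : Finset α} {W : Finset (α × α)}
    (hW : IsTwinPairing (endpointLT g) S W) (hg : (S : Set α).PairwiseDisjoint (edgeOf g)) :
    HasTwins (S.image (edgeOf g)) #W := by
  obtain ⟨hmem, hcomp⟩ := hW
  have hinj : Set.InjOn (edgeOf g) S := fun a ha b hb h ↦
    hg.elim_finset ha hb _ (apply_mem_edgeOf g a false) (h ▸ apply_mem_edgeOf g a false)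
  have hlt {w w' : α × α} (hw : w ∈ W) (hw' : w' ∈ W) (s t : Bool) :
      g w.1 s < g w'.1 t ↔ g w.2 s < g w'.2 t :=
    (hcomp w hw w' hw').1 (s, t)
  have heq {w w' : α × α} (hw : w ∈ W) (hw' : w' ∈ W) : w.1 = w'.1 ↔ w.2 = w'.2 := calc
    w.1 = w'.1 ↔ g w.1 false = g w'.1 false :=
      ⟨fun h ↦ h ▸ rfl, eq_of_apply_eq_apply hg (hmem w hw).1 (hmem w' hw').1⟩
    _ ↔ g w.2 false = g w'.2 false := by
      simp only [le_antisymm_iff, ← not_lt, hlt hw hw', hlt hw' hw]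
    _ ↔ w.2 = w'.2 :=
      ⟨eq_of_apply_eq_apply hg (hmem w hw).2 (hmem w' hw').2, fun h ↦ h ▸ rfl⟩
  refine ⟨W.image (edgeOf fun w ↦ g w.1), W.image (edgeOf fun w ↦ g w.2),
    image_subset_iff.2 fun w hw ↦ mem_image_of_mem (edgeOf g) (hmem w hw).1,
    image_subset_iff.2 fun w hw ↦ mem_image_of_mem (edgeOf g) (hmem w hw).2,
    disjoint_left.2 fun x hx hx' ↦ ?_, matchIso_image_edgeOf fun w hw w' hw' ↦ hlt hw hw',
    card_image_of_injOn fun w hw w' hw' e ↦ ?_, card_image_of_injOn fun w hw w' hw' e ↦ ?_⟩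
  · obtain ⟨w, hw, s, rfl⟩ := mem_mSupport_image_edgeOf.1 hx
    obtain ⟨w', hw', t, e⟩ := mem_mSupport_image_edgeOf.1 hx'
    exact (hcomp w hw w' hw').2 (eq_of_apply_eq_apply hg (hmem w hw).1 (hmem w' hw').2 e.symm)
  · have h1 := hinj (hmem w hw).1 (hmem w' hw').1 e
    exact Prod.ext h1 ((heq hw hw').1 h1)
  · have h2 := hinj (hmem w hw).2 (hmem w' hw').2 e
    exact Prod.ext ((heq hw hw').2 h2) h2

/-! ### The upper bound -/

lemma exists_forall_not_of_card_filter_mul_le {D Ω : Type*} [Fintype D] [Fintype Ω] [Nonempty Ω]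
    {bad : D → Ω → Prop} [∀ d, DecidablePred (bad d)] {N : ℕ}
    (hbad : ∀ d, #{ω | bad d ω} * N ≤ Fintype.card Ω) (hN : Fintype.card D < N) :
    ∃ ω, ∀ d, ¬ bad d ω := by
  classical
  by_contra! hcover
  have hΩ : Fintype.card Ω ≤ ∑ d, #{ω | bad d ω} := by
    refine (card_le_card fun ω _ ↦ ?_).trans card_biUnion_le
    simpa only [mem_biUnion, mem_filter_univ, mem_univ, true_and] using hcover ω
  have h : N * Fintype.card Ω ≤ Fintype.card D * Fintype.card Ω := calc
    N * Fintype.card Ω ≤ N * ∑ d, #{ω | bad d ω} := Nat.mul_le_mul_left N hΩ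
    _ = ∑ d, #{ω | bad d ω} * N := by rw [mul_comm, sum_mul]
    _ ≤ ∑ _d : D, Fintype.card Ω := sum_le_sum fun d _ ↦ hbad d
    _ = Fintype.card D * Fintype.card Ω := by rw [sum_const, smul_eq_mul, card_univ]
  exact hN.not_ge (Nat.le_of_mul_le_mul_right h Fintype.card_pos)

lemma perm_eq_one_of_lt_iff_lt [Finite κ] [LinearOrder β] {h : κ → β} (hinj : h.Injective)
    {θ : Equiv.Perm κ} (hθ : ∀ a b, h (θ a) < h (θ b) ↔ h a < h b) : θ = 1 := by
  let _ : LinearOrder κ := LinearOrder.lift' h hinj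
  have hle (a b : κ) : θ a ≤ θ b ↔ a ≤ b := not_lt.symm.trans ((hθ b a).not.trans not_lt)
  have hrefl : (⟨θ, @hle⟩ : κ ≃o κ) = OrderIso.refl κ := Subsingleton.elim _ _
  ext a
  exact congrArg (fun f : κ ≃o κ ↦ f a) hrefl

lemma card_filter_lt_iff_lt_mul_factorial_le [Fintype κ] [Fintype α] [DecidableEq α]
    [Fintype β] [LinearOrder β] {u v : κ → α} (hu : u.Injective)
    (huv : ∀ a b, u a ≠ v b) :
    #{σ : α ≃ β | ∀ a b, σ (u a) < σ (u b) ↔ σ (v a) < σ (v b)} * (Fintype.card κ)! ≤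
      Fintype.card (α ≃ β) := by
  classical
  let ι : κ ↪ α := ⟨u, hu⟩
  have hτu (τ : Equiv.Perm κ) (a : κ) : τ.viaEmbedding ι (u a) = u (τ a) :=
    τ.viaEmbedding_apply ι a
  have hτv (τ : Equiv.Perm κ) (a : κ) : τ.viaEmbedding ι (v a) = v a :=
    τ.viaEmbedding_apply_of_notMem ι _ fun ⟨b, hb⟩ ↦ huv b a hb
  rw [← Fintype.card_perm, ← card_univ (α := Equiv.Perm κ), ← card_product, ← card_univ]
  refine card_le_card_of_injOn (fun p ↦ (p.2.viaEmbedding ι).trans p.1) (fun _ _ ↦ mem_univ _) ?_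
  rintro ⟨σ, τ⟩ hσ ⟨σ', τ'⟩ hσ' heq
  simp only [coe_product, Set.mem_prod, mem_coe, mem_filter_univ] at hσ hσ'
  have hcomp (p : α) : σ (τ.viaEmbedding ι p) = σ' (τ'.viaEmbedding ι p) := DFunLike.congr_fun heq p
  -- Since `σ` and `σ'` agree on the values of `v`, they induce the same order on those of `u`, so
  -- that the permutation `τ * τ'⁻¹` relating them is trivial.
  have hv (a : κ) : σ (v a) = σ' (v a) := by simpa only [hτv] using hcomp (v a)
  have hu' (a : κ) : σ (u ((τ * τ'⁻¹) a)) = σ' (u a) := by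
    simpa only [hτu, ← Equiv.Perm.mul_apply, mul_inv_cancel, Equiv.Perm.one_apply] using
      hcomp (u (τ'⁻¹ a))
  have hθ : τ * τ'⁻¹ = 1 := perm_eq_one_of_lt_iff_lt (σ.injective.comp hu) fun a b ↦ by
    simp only [Function.comp_apply, hu', hσ.1 a b, hσ'.1 a b, hv]
  obtain rfl : τ = τ' := mul_inv_eq_one.1 hθ
  have hσσ' : σ = σ' := Equiv.ext fun p ↦ by
    simpa only [Equiv.apply_symm_apply] using hcomp ((τ.viaEmbedding ι).symm p)
  rw [hσσ']

lemma exists_forall_eq_xor {p q : Bool → β} [DecidableEq β] (hp : p.Injective)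
    (h : univ.image p = univ.image q) : ∃ c, ∀ s, p s = q (xor s c) := by
  have hmem (s : Bool) : ∃ c, q c = p s := by
    simpa only [h, mem_image, mem_univ, true_and] using mem_image_of_mem p (mem_univ s)
  obtain ⟨c, hc⟩ := hmem false
  obtain ⟨d, hd⟩ := hmem true
  have hcd : d = !c := Bool.eq_not.2 fun e ↦ by
    have := hp (hc.symm.trans (e ▸ hd))
    contradiction
  refine ⟨c, Bool.rec ?_ ?_⟩
  · rw [Bool.false_xor, hc]
  · rw [Bool.true_xor, ← hcd, hd]

/-- The vertices `(u a, s)` of the edges selected by `u`. -/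
def vertexOf (u : κ → α) (p : κ × Bool) : α × Bool := (u p.1, p.2)

/-- The vertices of the edges selected by `v`, where `(v a).2` tells whether the edge `(v a).1`
is traversed backwards. -/
def orientedVertexOf (v : κ → α × Bool) (p : κ × Bool) : α × Bool :=
  ((v p.1).1, xor p.2 (v p.1).2)

lemma HasTwins.exists_lt_iff_lt {n k l : ℕ} {h : Fin n × Bool → ℕ} (hinj : h.Injective)
    (ht : HasTwins (univ.image (edgeOf fun i s ↦ h (i, s))) l) (hkl : k ≤ l) :
    ∃ (u : Fin k ↪o Fin n) (v : Fin k → Fin n × Bool), (∀ a b, u a ≠ (v b).1) ∧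
      ∀ p q, h (vertexOf u p) < h (vertexOf u q) ↔
        h (orientedVertexOf v p) < h (orientedVertexOf v q) := by
  obtain ⟨M₁, M₂, h₁, h₂, hdisj, ⟨f, hbij, hmono, rfl⟩, rfl, -⟩ := ht
  set g : Fin n → Bool → ℕ := fun i s ↦ h (i, s)
  have hcard : k ≤ #({i | edgeOf g i ∈ M₁} : Finset (Fin n)) := by
    refine hkl.trans (card_le_card_of_surjOn (edgeOf g) fun e he ↦ ?_)
    obtain ⟨i, -, rfl⟩ := mem_image.1 (h₁ he)
    exact ⟨i, by simpa using he, rfl⟩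
  set u := orderEmbOfCardLe _ hcard
  have hu (a : Fin k) : edgeOf g (u a) ∈ M₁ :=
    (mem_filter_univ (u a)).1 (orderEmbOfCardLe_mem _ hcard a)
  have husupp (p : Fin k × Bool) : h (vertexOf u p) ∈ mSupport M₁ :=
    mem_mSupport.2 ⟨_, hu p.1, apply_mem_edgeOf g _ _⟩
  have hpartner (a : Fin k) : ∃ j : Fin n × Bool, ∀ s, f (g (u a) s) = g j.1 (xor s j.2) := by
    obtain ⟨j, -, hj⟩ := mem_image.1 (h₂ (mem_image_of_mem _ (hu a)))
    rw [edgeOf, edgeOf, image_image] at hj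
    obtain ⟨c, hc⟩ := exists_forall_eq_xor (p := f ∘ g (u a)) (q := g j) (fun s t hst ↦
      (Prod.ext_iff.1 (hinj (hbij.injOn (husupp (a, s)) (husupp (a, t)) hst))).2) hj.symm
    exact ⟨(j, c), hc⟩
  choose v hv' using hpartner
  have hv (p : Fin k × Bool) : f (h (vertexOf u p)) = h (orientedVertexOf v p) := hv' p.1 p.2
  refine ⟨u, v, fun a b hab ↦ ?_, fun p q ↦ ?_⟩
  · have hvb : orientedVertexOf v (b, (v b).2) = vertexOf u (a, false) := by
      rw [orientedVertexOf, vertexOf, hab, Bool.xor_self]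
    have hmem := hbij.mapsTo (husupp (b, (v b).2))
    rw [hv, hvb] at hmem
    exact disjoint_left.1 hdisj (husupp (a, false)) hmem
  · have hmono' : StrictMonoOn f (mSupport M₁) := fun x hx y hy ↦ hmono x hx y hy
    rw [← hv, ← hv, hmono'.lt_iff_lt (husupp p) (husupp q)]

/-- The matching on `{1, …, 2n}` whose `i`-th edge has the endpoints numbered by `σ`. -/
def matchingOfEquiv {n : ℕ} (σ : Fin n × Bool ≃ Fin (2 * n)) : Finset (Finset ℕ) :=
  univ.image (edgeOf fun i s ↦ (σ (i, s) : ℕ) + 1)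

lemma isOrderedMatching_matchingOfEquiv {n : ℕ} (σ : Fin n × Bool ≃ Fin (2 * n)) :
    IsOrderedMatching 2 n (matchingOfEquiv σ) := by
  have hinj {p q : Fin n × Bool} (h : (σ p : ℕ) + 1 = σ q + 1) : p = q :=
    σ.injective (Fin.ext (Nat.succ_injective h))
  have hdisj : Pairwise (Disjoint on edgeOf fun i s ↦ (σ (i, s) : ℕ) + 1) := by
    refine fun i j hij ↦ disjoint_left.2 fun x hi hj ↦ hij ?_
    obtain ⟨s, rfl⟩ := mem_edgeOf.1 hi
    obtain ⟨t, ht⟩ := mem_edgeOf.1 hj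
    exact congrArg Prod.fst (hinj ht).symm
  refine ⟨isMatching_image_edgeOf (fun i _ h ↦ ?_) (hdisj.set_pairwise _), ?_, ?_⟩
  · exact Bool.false_ne_true (congrArg Prod.snd (hinj h))
  · rw [matchingOfEquiv, card_image_of_injective, card_univ, Fintype.card_fin]
    intro i j hij
    obtain ⟨t, ht⟩ := mem_edgeOf.1 (hij ▸ apply_mem_edgeOf _ i false)
    exact congrArg Prod.fst (hinj ht).symm
  · ext x
    simp only [matchingOfEquiv, mem_mSupport_image_edgeOf, mem_univ, true_and, mem_Icc]
    constructor
    · rintro ⟨i, s, rfl⟩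
      omega
    · rintro ⟨hx, hxn⟩
      refine ⟨(σ.symm ⟨x - 1, by omega⟩).1, (σ.symm ⟨x - 1, by omega⟩).2, ?_⟩
      rw [Prod.mk.eta, Equiv.apply_symm_apply]
      exact Nat.sub_add_cancel hx

instance nonempty_prod_bool_equiv_fin (n : ℕ) : Nonempty (Fin n × Bool ≃ Fin (2 * n)) :=
  ⟨Fintype.equivOfCardEq (by simp [mul_comm])⟩

lemma exists_matchingOfEquiv_hasTwins_lt {n k : ℕ} (hk : (2 * n ^ 2) ^ k < k ! * (2 * k)!) :
    ∃ σ : Fin n × Bool ≃ Fin (2 * n), ∀ l, HasTwins (matchingOfEquiv σ) l → l < k := by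
  let D := {d : (Fin k ↪o Fin n) × (Fin k → Fin n × Bool) // ∀ a b, d.1 a ≠ (d.2 b).1}
  have hD : Fintype.card D < (2 * k)! := by
    refine lt_of_mul_lt_mul_left' (a := k !) (lt_of_le_of_lt ?_ hk)
    calc k ! * Fintype.card D
        ≤ k ! * Fintype.card ((Fin k ↪o Fin n) × (Fin k → Fin n × Bool)) :=
          Nat.mul_le_mul_left _ (Fintype.card_subtype_le _)
      _ = k ! * n.choose k * (n * 2) ^ k := by
          rw [Fintype.card_prod, ← Nat.card_eq_fintype_card,
            Nat.card_congr Set.powersetCard.ofFinEmbEquiv, Set.powersetCard.card, Nat.card_fin]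
          simp [mul_assoc]
      _ ≤ n ^ k * (n * 2) ^ k := by
          rw [← Nat.descFactorial_eq_factorial_mul_choose]
          exact Nat.mul_le_mul_right _ (Nat.descFactorial_le_pow n k)
      _ = (2 * n ^ 2) ^ k := by rw [← mul_pow]; ring
  have hbad (d : D) : #{σ : Fin n × Bool ≃ Fin (2 * n) | ∀ p q,
      σ (vertexOf d.1.1 p) < σ (vertexOf d.1.1 q) ↔
        σ (orientedVertexOf d.1.2 p) < σ (orientedVertexOf d.1.2 q)} * (2 * k)! ≤
      Fintype.card (Fin n × Bool ≃ Fin (2 * n)) := by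
    have hcard : Fintype.card (Fin k × Bool) = 2 * k := by simp [mul_comm]
    rw [← hcard]
    refine card_filter_lt_iff_lt_mul_factorial_le (fun p q h ↦ ?_)
      fun p q h ↦ d.2 p.1 q.1 (congrArg Prod.fst h)
    exact Prod.ext (d.1.1.injective (Prod.ext_iff.1 h).1) (Prod.ext_iff.1 h).2
  obtain ⟨σ, hσ⟩ := exists_forall_not_of_card_filter_mul_le hbad hD
  refine ⟨σ, fun l hl ↦ lt_of_not_ge fun hkl ↦ ?_⟩
  obtain ⟨u, v, huv, h⟩ := HasTwins.exists_lt_iff_lt (h := fun p ↦ (σ p : ℕ) + 1)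
    (fun p q hpq ↦ σ.injective (Fin.ext (Nat.succ_injective hpq))) hl hkl
  exact hσ ⟨(u, v), huv⟩ (by simpa using h)

lemma div_exp_one_pow_le_factorial (k : ℕ) : ((k : ℝ) / Real.exp 1) ^ k ≤ k ! := by
  rw [div_pow, ← Real.exp_nat_mul, mul_one, div_le_iff₀ (Real.exp_pos _), ← div_le_iff₀']
  · exact Real.pow_div_factorial_le_exp _ k.cast_nonneg k
  · exact_mod_cast k.factorial_pos

lemma two_mul_sq_pow_lt_factorial_mul_factorial {n k : ℕ}
    (hk : (Real.exp 1 / (2 : ℝ) ^ ((1 : ℝ) / 3)) * (n : ℝ) ^ ((2 : ℝ) / 3) < k) :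
    (2 * n ^ 2) ^ k < k ! * (2 * k)! := by
  have hc : 0 ≤ (Real.exp 1 / (2 : ℝ) ^ ((1 : ℝ) / 3)) * (n : ℝ) ^ ((2 : ℝ) / 3) := by positivity
  have hk0 : k ≠ 0 := by
    rintro rfl
    exact hk.not_ge (by simpa using hc)
  have hcube : Real.exp 1 ^ 3 / 2 * (n : ℝ) ^ 2 < (k : ℝ) ^ 3 := calc
    Real.exp 1 ^ 3 / 2 * (n : ℝ) ^ 2
      = ((Real.exp 1 / (2 : ℝ) ^ ((1 : ℝ) / 3)) * (n : ℝ) ^ ((2 : ℝ) / 3)) ^ 3 := by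
        rw [mul_pow, div_pow, ← Real.rpow_mul_natCast (by norm_num),
          ← Real.rpow_mul_natCast n.cast_nonneg]
        norm_num
    _ < (k : ℝ) ^ 3 := pow_lt_pow_left₀ hk hc three_ne_zero
  have hbase : 2 * (n : ℝ) ^ 2 < k / Real.exp 1 * (2 * k / Real.exp 1) ^ 2 := by
    have h : k / Real.exp 1 * (2 * k / Real.exp 1) ^ 2 = 4 * (k : ℝ) ^ 3 / Real.exp 1 ^ 3 := by
      ring
    rw [h, lt_div_iff₀ (by positivity)]
    linarith
  have hreal : (2 * (n : ℝ) ^ 2) ^ k < (k ! : ℝ) * (2 * k)! := calc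
    (2 * (n : ℝ) ^ 2) ^ k < (k / Real.exp 1 * (2 * k / Real.exp 1) ^ 2) ^ k :=
      pow_lt_pow_left₀ hbase (by positivity) hk0
    _ = (k / Real.exp 1) ^ k * (((2 * k : ℕ) : ℝ) / Real.exp 1) ^ (2 * k) := by
      rw [mul_pow, ← pow_mul]
      push_cast
      rfl
    _ ≤ (k ! : ℝ) * (2 * k)! := by
      gcongr <;> exact div_exp_one_pow_le_factorial _
  exact_mod_cast hreal

lemma minTwins_two_le (n : ℕ) :
    (minTwins 2 n : ℝ) ≤ (Real.exp 1 / (2 : ℝ) ^ ((1 : ℝ) / 3)) * (n : ℝ) ^ ((2 : ℝ) / 3) := by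
  set c := (Real.exp 1 / (2 : ℝ) ^ ((1 : ℝ) / 3)) * (n : ℝ) ^ ((2 : ℝ) / 3)
  have hlt : c < (⌊c⌋₊ + 1 : ℕ) := by
    push_cast
    exact Nat.lt_floor_add_one c
  obtain ⟨σ, hσ⟩ :=
    exists_matchingOfEquiv_hasTwins_lt (two_mul_sq_pow_lt_factorial_mul_factorial hlt)
  have hmin : minTwins 2 n ≤ ⌊c⌋₊ := calc
    minTwins 2 n ≤ twinMax (matchingOfEquiv σ) :=
      Nat.sInf_le ⟨_, isOrderedMatching_matchingOfEquiv σ, rfl⟩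
    _ ≤ ⌊c⌋₊ := csSup_le' fun l hl ↦ Nat.le_of_lt_succ (hσ l hl)
  exact (Nat.cast_le.2 hmin).trans (Nat.floor_le (by positivity))

/-! ### Chains and buckets -/

lemma exists_height_of_card_chain_le {r : α → α → Prop} [IsStrictOrder α r] {S : Finset α} {k : ℕ}
    (hk : ∀ C ⊆ S, IsChain r (C : Set α) → #C ≤ k) :
    ∃ l : α → ℕ, (∀ a ∈ S, l a < k) ∧ ∀ a ∈ S, ∀ b, r a b → l a < l b := by
  classical
  let below (a : α) : Finset (Finset α) :=
    {C ∈ S.powerset | IsChain r (C : Set α) ∧ ∀ c ∈ C, r c a}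
  have hbelow {a : α} {C : Finset α} :
      C ∈ below a ↔ C ⊆ S ∧ IsChain r (C : Set α) ∧ ∀ c ∈ C, r c a := by
    rw [mem_filter, mem_powerset]
  have hinsert {a : α} (ha : a ∈ S) : ∃ C ⊆ S, IsChain r (C : Set α) ∧
      (∀ c ∈ C, c = a ∨ r c a) ∧ #C = (below a).sup card + 1 := by
    obtain ⟨C, hC, hcard⟩ := exists_mem_eq_sup (below a)
      ⟨∅, hbelow.2 ⟨empty_subset S, by simp⟩⟩ card
    obtain ⟨hCS, hchain, hCa⟩ := hbelow.1 hC
    refine ⟨insert a C, insert_subset ha hCS, ?_, fun c hc ↦ ?_, ?_⟩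
    · rw [coe_insert]
      exact hchain.insert fun c hc _ ↦ .inr (hCa c hc)
    · exact (mem_insert.1 hc).imp_right (hCa c)
    · rw [card_insert_of_notMem fun haC ↦ irrefl a (hCa a haC), hcard]
  refine ⟨fun a ↦ (below a).sup card, fun a ha ↦ ?_, fun a ha b hab ↦ ?_⟩
  · obtain ⟨C, hCS, hchain, -, hcard⟩ := hinsert ha
    exact Nat.lt_of_succ_le (hcard.symm.trans_le (hk C hCS hchain))
  · obtain ⟨C, hCS, hchain, hCa, hcard⟩ := hinsert ha
    refine Nat.lt_of_succ_le (hcard.symm.trans_le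
      (le_sup (f := card) (hbelow.2 ⟨hCS, hchain, fun c hc ↦ ?_⟩)))
    rcases hCa c hc with rfl | hca
    exacts [hab, _root_.trans hca hab]

lemma exists_isChain_of_pow_card_lt [Fintype ι] {r : ι → α → α → Prop}
    [∀ i, IsStrictOrder α (r i)] {S : Finset α} {k : ℕ}
    (htotal : ∀ a ∈ S, ∀ b ∈ S, a ≠ b → ∃ i, r i a b ∨ r i b a)
    (hk : k ^ Fintype.card ι < #S) :
    ∃ i, ∃ C ⊆ S, IsChain (r i) (C : Set α) ∧ k < #C := by
  classical
  by_contra! hshort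
  choose l hl hlr using fun i ↦ exists_height_of_card_chain_le (hshort i)
  have hmaps (a : α) (ha : a ∈ S) : (fun i ↦ l i a) ∈ Fintype.piFinset fun _ : ι ↦ range k :=
    Fintype.mem_piFinset.2 fun i ↦ mem_range.2 (hl i a ha)
  have hcard : #(Fintype.piFinset fun _ : ι ↦ range k) = k ^ Fintype.card ι := by simp
  obtain ⟨a, ha, b, hb, hab, heq⟩ := exists_ne_map_eq_of_card_lt_of_maps_to (hcard ▸ hk) hmaps
  obtain ⟨i, h | h⟩ := htotal a ha b hb hab
  · exact (hlr i a ha b h).ne (congrFun heq i)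
  · exact (hlr i b hb a h).ne' (congrFun heq i)

/-- The position, counted from `0`, of `x a` among the values of `x` on `S`. -/
def valueRank [LinearOrder β] (S : Finset α) (x : α → β) (a : α) : ℕ := #{z ∈ S | x z < x a}

section Rank

variable [LinearOrder β] {S : Finset α} {x : α → β} {a b : α}

lemma valueRank_mono (h : x a ≤ x b) : valueRank S x a ≤ valueRank S x b :=
  card_le_card (monotone_filter_right _ fun _ _ hz ↦ hz.trans_le h)

lemma valueRank_lt_valueRank_iff (ha : a ∈ S) : valueRank S x a < valueRank S x b ↔ x a < x b := by
  refine ⟨fun h ↦ lt_of_not_ge fun hba ↦ (valueRank_mono hba).not_gt h, fun h ↦ ?_⟩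
  refine card_lt_card (ssubset_iff_of_subset ?_ |>.2 ⟨a, ?_, ?_⟩)
  · exact monotone_filter_right _ fun _ _ hz ↦ hz.trans h
  · exact mem_filter.2 ⟨ha, h⟩
  · exact fun h' ↦ (mem_filter.1 h').2.false

lemma valueRank_lt_card (ha : a ∈ S) : valueRank S x a < #S :=
  card_lt_card (filter_ssubset.2 ⟨a, ha, lt_irrefl _⟩)

lemma injOn_valueRank (hx : Set.InjOn x S) : Set.InjOn (valueRank S x) S := by
  intro a ha b hb h
  refine hx ha hb (le_antisymm ?_ ?_) <;> refine le_of_not_gt fun hlt ↦ ?_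
  · exact ((valueRank_lt_valueRank_iff hb).2 hlt).ne' h
  · exact ((valueRank_lt_valueRank_iff ha).2 hlt).ne h

lemma exists_valueRank_eq (hx : Set.InjOn x S) {i : ℕ} (hi : i < #S) :
    ∃ a ∈ S, valueRank S x a = i := by
  refine surjOn_of_injOn_of_card_le (valueRank S x) (t := range #S) (fun a ha ↦ ?_)
    (injOn_valueRank hx) (card_range _).le (by simpa using hi)
  simpa using valueRank_lt_card ha

lemma exists_card_filter_le_eq (hx : Set.InjOn x S) {m : ℕ} (hm : m < #S) :
    ∃ c, #{a ∈ S | x a ≤ c} = m + 1 := by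
  classical
  obtain ⟨a, ha, hrank⟩ := exists_valueRank_eq hx hm
  have hinsert : {b ∈ S | x b ≤ x a} = insert a {b ∈ S | x b < x a} := by
    ext b
    simp only [mem_filter, mem_insert, le_iff_eq_or_lt]
    constructor
    · rintro ⟨hb, h | h⟩
      exacts [.inl (hx hb ha h), .inr ⟨hb, h⟩]
    · rintro (rfl | ⟨hb, h⟩)
      exacts [⟨ha, .inl rfl⟩, ⟨hb, .inr h⟩]
  refine ⟨x a, ?_⟩
  rw [hinsert, card_insert_of_notMem (by simp), ← hrank, valueRank]

end Rank

/-- `blk` divides `S` into `p` blocks, each of at most `B` elements, that are consecutive with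
respect to the values of `x`. -/
structure IsBucketing [LT β] (S : Finset α) (x : α → β) (blk : α → ℕ) (p B : ℕ) : Prop where
  lt : ∀ a ∈ S, blk a < p
  lt_of_lt : ∀ a ∈ S, ∀ b ∈ S, blk a < blk b → x a < x b
  card_le : ∀ c, #{a ∈ S | blk a = c} ≤ B

lemma exists_isBucketing [LinearOrder β] {S : Finset α} {x : α → β} (hx : Set.InjOn x S)
    {p B : ℕ} (hB : 0 < B) (hS : #S ≤ p * B) : ∃ blk, IsBucketing S x blk p B := by
  refine ⟨fun a ↦ valueRank S x a / B, fun a ha ↦ ?_, fun a ha b _ h ↦ ?_, fun c ↦ ?_⟩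
  · exact Nat.div_lt_of_lt_mul ((valueRank_lt_card ha).trans_le (mul_comm p B ▸ hS))
  · exact (valueRank_lt_valueRank_iff ha).1
      (lt_of_not_ge fun h' ↦ (Nat.div_le_div_right h').not_gt h)
  · have hmaps : Set.MapsTo (valueRank S x) ({a ∈ S | valueRank S x a / B = c} : Finset α)
        (Ico (c * B) (c * B + B) : Finset ℕ) := fun a ha ↦ by
      obtain ⟨-, rfl⟩ := mem_filter.1 ha
      exact mem_coe.2 (mem_Ico.2 ⟨Nat.div_mul_le_self _ _, Nat.lt_div_mul_add hB⟩)
    calc #{a ∈ S | valueRank S x a / B = c}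
        ≤ #(Ico (c * B) (c * B + B)) := card_le_card_of_injOn _ hmaps
          ((injOn_valueRank hx).mono fun a ha ↦ (mem_filter.1 ha).1)
      _ = B := by rw [Nat.card_Ico, Nat.add_sub_cancel_left]

/-! ### Twins of points in the plane -/

lemma exists_card_eq_three_initial_in_row [LinearOrder β] [DecidableEq α] [DecidableEq γ]
    {y : α → β} {row : α → γ} {P : Finset α} (hy : Set.InjOn y P) (hP : 2 * #(P.image row) < #P) :
    ∃ Q ⊆ P, #Q = 3 ∧ ∃ r, (∀ a ∈ Q, row a = r) ∧
      ∀ a ∈ Q, ∀ b ∈ P \ Q, row b = r → y a < y b := by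
  obtain ⟨r, -, hr⟩ := exists_lt_card_fiber_of_mul_lt_card_of_maps_to (n := 2)
    (fun a ↦ mem_image_of_mem row) (by omega : #(P.image row) * 2 < #P)
  obtain ⟨c, hc⟩ := exists_card_filter_le_eq (hy.mono (filter_subset (fun a ↦ row a = r) P)) hr
  refine ⟨_, (filter_subset _ _).trans (filter_subset _ _), hc, r, fun a ha ↦ ?_,
    fun a ha b hb hbr ↦ (mem_filter.1 ha).2.trans_lt (lt_of_not_ge fun hbc ↦ ?_)⟩
  · exact (mem_filter.1 (mem_filter.1 ha).1).2
  · obtain ⟨hbP, hbQ⟩ := mem_sdiff.1 hb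
    exact hbQ (mem_filter.2 ⟨mem_filter.2 ⟨hbP, hbr⟩, hbc⟩)

lemma exists_separated_triples [LinearOrder β] [LinearOrder γ] {y : α → β} {row : α → γ}
    {P : Finset α} {T : ℕ} (hy : Set.InjOn y P)
    (hrow : ∀ a ∈ P, ∀ b ∈ P, row a < row b → y a < y b) (hT : 3 * T + 2 * #(P.image row) ≤ #P) :
    ∃ F : Finset (Fin 3 → α), #F = T ∧
      (∀ f ∈ F, f.Injective ∧ (∀ i, f i ∈ P) ∧ ∀ i j, row (f i) = row (f j)) ∧
      ∀ f ∈ F, ∀ g ∈ F, f ≠ g →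
        (∀ i j, y (f i) < y (g j)) ∨ ∀ i j, y (g i) < y (f j) := by
  classical
  induction T generalizing P with
  | zero => exact ⟨∅, by simp⟩
  | succ T ih =>
    obtain ⟨Q, hQP, hQ, r, hQr, hQy⟩ :=
      exists_card_eq_three_initial_in_row (row := row) hy (by omega)
    have hPQ : P \ Q ⊆ P := sdiff_subset
    have hcard' : 3 * T + 2 * #((P \ Q).image row) ≤ #(P \ Q) := by
      have := card_le_card (image_subset_image (f := row) hPQ)
      rw [card_sdiff_of_subset hQP]
      omega
    obtain ⟨F, hcard, hF, hsep⟩ := ih (hy.mono hPQ)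
      (fun a ha b hb ↦ hrow a (hPQ ha) b (hPQ hb)) hcard'
    let f (i : Fin 3) : α := (equivFinOfCardEq hQ).symm i
    have hfQ (i : Fin 3) : f i ∈ Q := ((equivFinOfCardEq hQ).symm i).2
    have hfr (i : Fin 3) : row (f i) = r := hQr _ (hfQ i)
    have hfsep (g) (hg : g ∈ F) : (∀ i j, y (f i) < y (g j)) ∨ ∀ i j, y (g i) < y (f j) := by
      obtain ⟨-, hgPQ, hgr⟩ := hF g hg
      have hfP (i : Fin 3) : f i ∈ P := hQP (hfQ i)
      have hgP (i : Fin 3) : g i ∈ P := hPQ (hgPQ i)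
      rcases lt_trichotomy (row (g 0)) r with h | h | h
      · exact .inr fun i j ↦ hrow _ (hgP i) _ (hfP j) (by rwa [hgr i 0, hfr])
      · exact .inl fun i j ↦ hQy _ (hfQ i) _ (hgPQ j) (by rwa [hgr j 0])
      · exact .inl fun i j ↦ hrow _ (hfP i) _ (hgP j) (by rwa [hgr j 0, hfr])
    have hfF : f ∉ F := fun h ↦ (hfsep f h).elim (fun h ↦ (h 0 0).false) fun h ↦ (h 0 0).false
    refine ⟨insert f F, by rw [card_insert_of_notMem hfF, hcard], ?_, ?_⟩
    · refine (forall_mem_insert _ _ _).2 ⟨⟨?_, fun i ↦ hQP (hfQ i), fun i j ↦ ?_⟩, fun g hg ↦ ?_⟩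
      · exact Subtype.val_injective.comp (Equiv.injective _)
      · rw [hfr, hfr]
      · exact ⟨(hF g hg).1, fun i ↦ hPQ ((hF g hg).2.1 i), (hF g hg).2.2⟩
    · intro g hg h hh hgh
      rcases mem_insert.1 hg with rfl | hgF <;> rcases mem_insert.1 hh with rfl | hhF
      exacts [(hgh rfl).elim, hfsep h hhF, (hfsep g hgF).symm, hsep g hgF h hhF hgh]

lemma exists_adjacent_lt_or_gt [LinearOrder β] {u v : Fin 3 → β} (huv : ∀ i, u i ≠ v i) :
    ∃ i, (u i < v i ∧ u (i + 1) < v (i + 1)) ∨ (v i < u i ∧ v (i + 1) < u (i + 1)) := by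
  have hcyclic (p : Fin 3 → Bool) : ∃ i, p i = p (i + 1) := by decide +revert
  have hgt {i : Fin 3} (h : ¬ u i < v i) : v i < u i := lt_of_le_of_ne (le_of_not_gt h) (huv i).symm
  obtain ⟨i, hi⟩ := hcyclic fun i ↦ decide (u i < v i)
  rw [decide_eq_decide] at hi
  by_cases h : u i < v i
  exacts [⟨i, .inl ⟨h, hi.1 h⟩⟩, ⟨i, .inr ⟨hgt h, hgt (hi.not.1 h)⟩⟩]

/-- The two ways of comparing points `(x a, y a)` of the plane, by abscissa and by ordinate. -/
def pointLT [LT β] [LT γ] (x : α → β) (y : α → γ) : Bool → α → α → Prop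
  | false, a, b => x a < x b
  | true, a, b => y a < y b

lemma twinCompatible_pointLT [LT β] [LT γ] {x : α → β} {y : α → γ} {w w' : α × α} :
    TwinCompatible (pointLT x y) w w' ↔
      (x w.1 < x w'.1 ↔ x w.2 < x w'.2) ∧ (y w.1 < y w'.1 ↔ y w.2 < y w'.2) ∧ w.1 ≠ w'.2 := by
  rw [TwinCompatible, Bool.forall_bool, and_assoc]
  rfl

lemma lt_iff_lt_of_lt_and_lt_or [Preorder β] {a b c d : β} (h : a < b ∧ c < d ∨ b < a ∧ d < c) :
    a < b ↔ c < d := by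
  rcases h with ⟨h, h'⟩ | ⟨h, h'⟩
  exacts [iff_of_true h h', iff_of_false h.not_gt h'.not_gt]

lemma exists_isTwinPairing_of_separated_triples [LinearOrder β] [LinearOrder γ] {x : α → β}
    {y : α → γ} {P : Finset α} {F : Finset (Fin 3 → α)} {k : ℕ} (hx : Set.InjOn x P)
    (hF : ∀ f ∈ F, f.Injective ∧ ∀ i, f i ∈ P)
    (hsep : ∀ f ∈ F, ∀ g ∈ F, f ≠ g → (∀ i j, y (f i) < y (g j)) ∨ ∀ i j, y (g i) < y (f j))
    (hk : k ^ 3 < #F) :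
    ∃ W, IsTwinPairing (pointLT x y) P W ∧ k < #W ∧
      ∀ w ∈ W, ∃ f ∈ F, ∃ i j, w = (f i, f j) := by
  classical
  let r (i : Fin 3) (f g : Fin 3 → α) : Prop := x (f i) < x (g i) ∧ x (f (i + 1)) < x (g (i + 1))
  have hr (i : Fin 3) : IsStrictOrder (Fin 3 → α) (r i) :=
    { irrefl f h := h.1.false
      trans f g h hfg hgh := ⟨hfg.1.trans hgh.1, hfg.2.trans hgh.2⟩ }
  have hne {f g : Fin 3 → α} (hf : f ∈ F) (hg : g ∈ F) (hfg : f ≠ g) (i j : Fin 3) :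
      f i ≠ g j := by
    rintro h
    rcases hsep f hf g hg hfg with hy | hy
    exacts [(hy i j).ne (congrArg y h), (hy j i).ne' (congrArg y h)]
  have htotal (f) (hf : f ∈ F) (g) (hg : g ∈ F) (hfg : f ≠ g) : ∃ i, r i f g ∨ r i g f :=
    exists_adjacent_lt_or_gt fun i h ↦
      hne hf hg hfg i i (hx ((hF f hf).2 i) ((hF g hg).2 i) h)
  obtain ⟨i, C, hCF, hchain, hkC⟩ := exists_isChain_of_pow_card_lt htotal (by simpa using hk)
  refine ⟨C.image fun f ↦ (f i, f (i + 1)), ⟨forall_mem_image.2 fun f hf ↦ ?_,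
    forall_mem_image.2 fun f hf ↦ forall_mem_image.2 fun g hg ↦ ?_⟩, ?_,
    forall_mem_image.2 fun f hf ↦ ⟨f, hCF hf, i, i + 1, rfl⟩⟩
  · exact ⟨(hF f (hCF hf)).2 i, (hF f (hCF hf)).2 (i + 1)⟩
  · rw [twinCompatible_pointLT]
    rcases eq_or_ne f g with rfl | hfg
    · simp [(hF f (hCF hf)).1.eq_iff]
    · exact ⟨lt_iff_lt_of_lt_and_lt_or (hchain hf hg hfg),
        lt_iff_lt_of_lt_and_lt_or ((hsep f (hCF hf) g (hCF hg) hfg).imp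
          (fun h ↦ ⟨h _ _, h _ _⟩) fun h ↦ ⟨h _ _, h _ _⟩),
        hne (hCF hf) (hCF hg) hfg _ _⟩
  · rwa [card_image_of_injOn fun f hf g hg h ↦ by_contra fun hfg ↦
      hne (hCF hf) (hCF hg) hfg i i (congrArg Prod.fst h)]

lemma exists_rowwise_isTwinPairing [LinearOrder β] [LinearOrder γ] {x : α → β} {y : α → γ}
    {row : α → ℕ} {P : Finset α} {T k : ℕ} (hx : Set.InjOn x P) (hy : Set.InjOn y P)
    (hrow : ∀ a ∈ P, ∀ b ∈ P, row a < row b → y a < y b)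
    (hT : 3 * T + 2 * #(P.image row) ≤ #P) (hk : k ^ 3 < T) :
    ∃ W, IsTwinPairing (pointLT x y) P W ∧ k < #W ∧ ∀ w ∈ W, row w.1 = row w.2 := by
  obtain ⟨F, rfl, hF, hsep⟩ := exists_separated_triples hy hrow hT
  obtain ⟨W, hW, hkW, hWF⟩ := exists_isTwinPairing_of_separated_triples hx
    (fun f hf ↦ ⟨(hF f hf).1, (hF f hf).2.1⟩) hsep hk
  refine ⟨W, hW, hkW, fun w hw ↦ ?_⟩
  obtain ⟨f, hf, i, j, rfl⟩ := hWF w hw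
  exact (hF f hf).2.2 i j

lemma IsTwinPairing.mono {R : κ → α → α → Prop} {S S' : Finset α} {W : Finset (α × α)}
    (hW : IsTwinPairing R S W) (h : S ⊆ S') : IsTwinPairing R S' W :=
  ⟨fun w hw ↦ (hW.1 w hw).imp (@h _) (@h _), hW.2⟩

lemma isTwinPairing_empty (R : κ → α → α → Prop) (S : Finset α) : IsTwinPairing R S ∅ := by
  simp [IsTwinPairing]

lemma IsTwinPairing.union [DecidableEq α] {R : κ → α → α → Prop} {S : Finset α}
    {W W' : Finset (α × α)} (hW : IsTwinPairing R S W) (hW' : IsTwinPairing R S W')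
    (hcross : ∀ w ∈ W, ∀ w' ∈ W', TwinCompatible R w w' ∧ TwinCompatible R w' w) :
    IsTwinPairing R S (W ∪ W') := by
  refine ⟨fun w hw ↦ (mem_union.1 hw).elim (hW.1 w) (hW'.1 w), fun w hw w' hw' ↦ ?_⟩
  rcases mem_union.1 hw with h | h <;> rcases mem_union.1 hw' with h' | h'
  exacts [hW.2 w h w' h', (hcross w h w' h').1, (hcross w' h' w h).2, hW'.2 w h w' h']

section Bucketing

variable [LinearOrder β] {S : Finset α} {x : α → β} {blk : α → ℕ} {p B : ℕ}

lemma IsBucketing.lt_iff_lt (h : IsBucketing S x blk p B) {a b : α} (ha : a ∈ S) (hb : b ∈ S)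
    (hab : blk a ≠ blk b) : x a < x b ↔ blk a < blk b := by
  refine ⟨fun hlt ↦ ?_, h.lt_of_lt a ha b hb⟩
  exact hab.lt_or_gt.resolve_right fun hgt ↦ (h.lt_of_lt b hb a ha hgt).not_gt hlt

lemma IsBucketing.card_filter_mem_le (h : IsBucketing S x blk p B) (U : Finset ℕ) :
    #{a ∈ S | blk a ∈ U} ≤ B * #U :=
  card_le_mul_card_image_of_maps_to (fun _ ha ↦ (mem_filter.1 ha).2) B fun c _ ↦
    (card_le_card (filter_subset_filter _ (filter_subset _ _))).trans (h.card_le c)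

lemma exists_lt_card_filter_of_isBucketing [LinearOrder γ] {y : α → γ} {row : α → ℕ} {m L K : ℕ}
    {U V : Finset ℕ} (hblk : IsBucketing S x blk p B) (hrow : IsBucketing S y row m L)
    (hU : U ⊆ range p) (hcount : #V * L + #U * B + (p - #U) * K < #S) :
    ∃ c ∉ U, K < #{a ∈ S | blk a = c ∧ row a ∉ V} := by
  classical
  set rest := {a ∈ S | row a ∉ V ∧ blk a ∉ U}
  have hS : #S ≤ #V * L + #U * B + #rest := by
    rw [mul_comm #V, mul_comm #U]
    refine le_trans (card_le_card fun a ha ↦ ?_) <| (card_union_le _ rest).trans <|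
      Nat.add_le_add_right ((card_union_le _ _).trans (Nat.add_le_add
        (hrow.card_filter_mem_le V) (hblk.card_filter_mem_le U))) _
    simp only [rest, mem_union, mem_filter]
    tauto
  have hmaps (a) (ha : a ∈ rest) : blk a ∈ range p \ U := by
    obtain ⟨haS, -, haU⟩ := mem_filter.1 ha
    exact mem_sdiff.2 ⟨mem_range.2 (hblk.lt a haS), haU⟩
  have hcard : #(range p \ U) * K < #rest := by
    rw [card_sdiff_of_subset hU, card_range]
    omega
  obtain ⟨c, hc, hK⟩ := exists_lt_card_fiber_of_mul_lt_card_of_maps_to hmaps hcard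
  refine ⟨c, (mem_sdiff.1 hc).2, hK.trans_le (card_le_card fun a ha ↦ ?_)⟩
  simp only [rest, mem_filter] at ha ⊢
  exact ⟨ha.1.1, ha.2, ha.1.2.1⟩

end Bucketing

/-- A twin pairing of points of the plane, divided into vertical blocks `blk` and horizontal rows
`row`, in which corresponding points share their block and their row and in which every block that
is used at all carries `q` pairs on average. The last property keeps the number of spoiled blocks
small while the pairing is extended block by block. -/
structure IsCellPairing [LT β] [LT γ] (x : α → β) (y : α → γ) (blk row : α → ℕ) (q : ℕ)
    (S : Finset α) (W : Finset (α × α)) : Prop where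
  isTwinPairing : IsTwinPairing (pointLT x y) S W
  blk_eq : ∀ w ∈ W, blk w.1 = blk w.2
  row_eq : ∀ w ∈ W, row w.1 = row w.2
  card_blocks_mul_le : #(W.image fun w ↦ blk w.1) * q ≤ #W

section CellPairing

variable [LinearOrder β] [LinearOrder γ] {S : Finset α} {x : α → β} {y : α → γ}
  {blk row : α → ℕ} {p B T L k : ℕ} {W : Finset (α × α)}

lemma twinCompatible_pointLT_of_ne {m : ℕ} (hblk : IsBucketing S x blk p B)
    (hrow : IsBucketing S y row m L) {w w' : α × α} (hw : w.1 ∈ S ∧ w.2 ∈ S)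
    (hw' : w'.1 ∈ S ∧ w'.2 ∈ S) (hb : blk w.1 = blk w.2) (hb' : blk w'.1 = blk w'.2)
    (hr : row w.1 = row w.2) (hr' : row w'.1 = row w'.2) (hbne : blk w.1 ≠ blk w'.1)
    (hrne : row w.1 ≠ row w'.1) : TwinCompatible (pointLT x y) w w' := by
  refine twinCompatible_pointLT.2 ⟨?_, ?_, fun e ↦ hbne (hb'.symm ▸ congrArg blk e)⟩
  · rw [hblk.lt_iff_lt hw.1 hw'.1 hbne, hblk.lt_iff_lt hw.2 hw'.2 (hb ▸ hb' ▸ hbne), hb, hb']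
  · rw [hrow.lt_iff_lt hw.1 hw'.1 hrne, hrow.lt_iff_lt hw.2 hw'.2 (hr ▸ hr' ▸ hrne), hr, hr']

lemma IsCellPairing.union [DecidableEq α] {q m : ℕ} (hW : IsCellPairing x y blk row q S W)
    (hblk : IsBucketing S x blk p B) (hrow : IsBucketing S y row m L) {W' : Finset (α × α)}
    {c : ℕ} {V : Finset ℕ} (hW' : IsTwinPairing (pointLT x y) S W') (hq : q ≤ #W')
    (hc : ∀ w ∈ W, blk w.1 ≠ c) (hV : ∀ w ∈ W, row w.1 ∈ V)
    (hcell : ∀ w ∈ W', blk w.1 = c ∧ blk w.2 = c ∧ row w.1 = row w.2 ∧ row w.1 ∉ V) :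
    IsCellPairing x y blk row q S (W ∪ W') := by
  have hdisj : Disjoint W W' := disjoint_left.2 fun w hw hw' ↦ hc w hw (hcell w hw').1
  refine ⟨hW.isTwinPairing.union hW' fun w hw w' hw' ↦ ?_, fun w hw ↦ ?_, fun w hw ↦ ?_, ?_⟩
  · have hmem := hW.isTwinPairing.1 w hw
    have hmem' := hW'.1 w' hw'
    obtain ⟨hc₁, hc₂, hr', hrV⟩ := hcell w' hw'
    have hb := hW.blk_eq w hw
    have hb' : blk w'.1 = blk w'.2 := hc₁.trans hc₂.symm
    have hr := hW.row_eq w hw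
    have hbne : blk w.1 ≠ blk w'.1 := hc₁ ▸ hc w hw
    have hrne : row w.1 ≠ row w'.1 := fun e ↦ hrV (e ▸ hV w hw)
    exact ⟨twinCompatible_pointLT_of_ne hblk hrow hmem hmem' hb hb' hr hr' hbne hrne,
      twinCompatible_pointLT_of_ne hblk hrow hmem' hmem hb' hb hr' hr hbne.symm hrne.symm⟩
  · exact (mem_union.1 hw).elim (hW.blk_eq w) fun h ↦ (hcell w h).1.trans (hcell w h).2.1.symm
  · exact (mem_union.1 hw).elim (hW.row_eq w) fun h ↦ (hcell w h).2.2.1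
  · have hblocks : (W ∪ W').image (fun w ↦ blk w.1) ⊆ insert c (W.image fun w ↦ blk w.1) := by
      rw [image_union, ← union_singleton]
      exact union_subset_union_right (image_subset_iff.2 fun w hw ↦
        mem_singleton.2 (hcell w hw).1)
    calc #((W ∪ W').image fun w ↦ blk w.1) * q
        ≤ (#(W.image fun w ↦ blk w.1) + 1) * q :=
          Nat.mul_le_mul_right q ((card_le_card hblocks).trans (card_insert_le _ _))
      _ = #(W.image fun w ↦ blk w.1) * q + q := by ring
      _ ≤ #W + #W' := Nat.add_le_add hW.card_blocks_mul_le hq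
      _ = #(W ∪ W') := (card_union_of_disjoint hdisj).symm

lemma IsCellPairing.exists_card_lt (hW : IsCellPairing x y blk row (k + 1) S W)
    (hx : Set.InjOn x S) (hy : Set.InjOn y S) (hblk : IsBucketing S x blk p B)
    (hrow : IsBucketing S y row (4 * T) L) (hk : k ^ 3 < T)
    (hcount : ∀ u, u * (k + 1) < T → T * L + u * B + (p - u) * (9 * T) < #S) (hWT : #W < T) :
    ∃ W', IsCellPairing x y blk row (k + 1) S W' ∧ #W < #W' := by
  classical
  set U := W.image fun w ↦ blk w.1
  have hUp : U ⊆ range p := image_subset_iff.2 fun w hw ↦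
    mem_range.2 (hblk.lt _ (hW.isTwinPairing.1 w hw).1)
  obtain ⟨V, hWV, hVT, hVcard⟩ : ∃ V, W.image (fun w ↦ row w.1) ⊆ V ∧ V ⊆ range (4 * T) ∧ #V = T :=
    exists_subsuperset_card_eq
      (image_subset_iff.2 fun w hw ↦ mem_range.2 (hrow.lt _ (hW.isTwinPairing.1 w hw).1))
      (card_image_le.trans hWT.le) (by rw [card_range]; omega)
  obtain ⟨c, hcU, hc⟩ := exists_lt_card_filter_of_isBucketing hblk hrow hUp (K := 9 * T)
    (by rw [hVcard]; exact hcount _ (hW.card_blocks_mul_le.trans_lt hWT))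
  set P := {a ∈ S | blk a = c ∧ row a ∉ V}
  have hPS : P ⊆ S := filter_subset _ _
  have hrows : #(P.image row) ≤ 3 * T := by
    refine (card_le_card (t := range (4 * T) \ V) (image_subset_iff.2 fun a ha ↦ ?_)).trans ?_
    · obtain ⟨haS, -, haV⟩ := mem_filter.1 ha
      exact mem_sdiff.2 ⟨mem_range.2 (hrow.lt a haS), haV⟩
    · rw [card_sdiff_of_subset hVT, card_range, hVcard]
      omega
  obtain ⟨W', hW', hkW', hrowW'⟩ := exists_rowwise_isTwinPairing (hx.mono hPS) (hy.mono hPS)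
    (fun a ha b hb ↦ hrow.lt_of_lt a (hPS ha) b (hPS hb)) (by omega) hk
  have hcell (w) (hw : w ∈ W') :
      blk w.1 = c ∧ blk w.2 = c ∧ row w.1 = row w.2 ∧ row w.1 ∉ V := by
    obtain ⟨-, h₁, h₁V⟩ := mem_filter.1 (hW'.1 w hw).1
    obtain ⟨-, h₂, -⟩ := mem_filter.1 (hW'.1 w hw).2
    exact ⟨h₁, h₂, hrowW' w hw, h₁V⟩
  have hcW (w) (hw : w ∈ W) : blk w.1 ≠ c := fun e ↦ hcU (e ▸ mem_image_of_mem _ hw)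
  refine ⟨W ∪ W', hW.union hblk hrow (hW'.mono hPS) hkW' hcW
    (fun w hw ↦ hWV (mem_image_of_mem _ hw)) hcell, ?_⟩
  rw [card_union_of_disjoint (disjoint_left.2 fun w hw hw' ↦ hcW w hw (hcell w hw').1)]
  omega

lemma exists_isCellPairing_le_card (hx : Set.InjOn x S) (hy : Set.InjOn y S)
    (hblk : IsBucketing S x blk p B) (hrow : IsBucketing S y row (4 * T) L) (hk : k ^ 3 < T)
    (hcount : ∀ u, u * (k + 1) < T → T * L + u * B + (p - u) * (9 * T) < #S) :
    ∃ W, IsCellPairing x y blk row (k + 1) S W ∧ T ≤ #W := by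
  suffices h : ∀ t ≤ T, ∃ W, IsCellPairing x y blk row (k + 1) S W ∧ t ≤ #W from h T le_rfl
  intro t
  induction t with
  | zero => exact fun _ ↦ ⟨∅, ⟨isTwinPairing_empty _ _, by simp, by simp, by simp⟩, Nat.zero_le _⟩
  | succ t ih =>
    intro ht
    obtain ⟨W, hW, htW⟩ := ih (by omega)
    rcases lt_or_ge #W T with hWT | hWT
    · obtain ⟨W', hW', hlt⟩ := hW.exists_card_lt hx hy hblk hrow hk hcount hWT
      exact ⟨W', hW', by omega⟩
    · exact ⟨W, hW, by omega⟩

end CellPairing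

lemma exists_lt_le_succ {f : ℕ → ℕ} {m : ℕ} (h0 : f 0 < m) (hm : ∃ t, m ≤ f t) :
    ∃ t, f t < m ∧ m ≤ f (t + 1) := by
  by_contra! hstep
  obtain ⟨t, ht⟩ := hm
  exact ht.not_gt (Nat.rec h0 hstep t)

lemma exists_grid_parameters {N t : ℕ} (ht : 50 ≤ t) (hN : 10 ^ 5 * t ^ 5 < (N + 1) ^ 3) :
    ∃ k p, k ^ 3 < t + 1 ∧ 2 * (t + 1) ≤ p * (k + 1) ∧
      18 * (t + 1) * p + 4 * (t + 1) + 2 * p < N := by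
  obtain ⟨k, hkT, hTq⟩ := exists_lt_le_succ (f := fun k ↦ k ^ 3) (m := t + 1) (by simp)
    ⟨t + 1, Nat.le_self_pow three_ne_zero _⟩
  obtain ⟨p, hp, hpq⟩ := exists_lt_le_succ (f := fun p ↦ p * (k + 1)) (m := 2 * (t + 1))
    (by simp) ⟨2 * (t + 1), Nat.le_mul_of_pos_right _ k.succ_pos⟩
  refine ⟨k, p + 1, hkT, hpq, ?_⟩
  have hk : 10 * (k + 1) ≤ t + 1 := by
    have h3 : 3 ≤ k := by
      by_contra! h
      have : (k + 1) ^ 3 ≤ 3 ^ 3 := Nat.pow_le_pow_left (by omega) 3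
      omega
    rcases h3.eq_or_lt with rfl | h4
    · omega
    · nlinarith [Nat.pow_le_pow_left h4 2]
  have hNk : 44 * (t + 1) ^ 2 ≤ (N + 1) * (k + 1) := by
    refine le_of_lt (lt_of_pow_lt_pow_left₀ 3 (Nat.zero_le _) ?_)
    have h51 : 50 * (t + 1) ≤ 51 * t := by omega
    have h5 := Nat.pow_le_pow_left h51 5
    rw [mul_pow, mul_pow] at h5
    calc (44 * (t + 1) ^ 2) ^ 3 = 44 ^ 3 * (t + 1) ^ 5 * (t + 1) := by ring
      _ ≤ 10 ^ 5 * t ^ 5 * (t + 1) := Nat.mul_le_mul_right _ (by omega)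
      _ < (N + 1) ^ 3 * (t + 1) := Nat.mul_lt_mul_of_pos_right hN t.succ_pos
      _ ≤ (N + 1) ^ 3 * (k + 1) ^ 3 := Nat.mul_le_mul_left _ hTq
      _ = ((N + 1) * (k + 1)) ^ 3 := (mul_pow _ _ 3).symm
  refine lt_of_mul_lt_mul_right (a := k + 1) ?_ (Nat.zero_le _)
  nlinarith

lemma cell_count_lt {N T p q u : ℕ} (hpq : 2 * T ≤ p * q) (hN : 18 * T * p + 4 * T + 2 * p < N)
    (hu : u * q < T) : T * (N / (4 * T) + 1) + u * (N / p + 1) + (p - u) * (9 * T) < N := by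
  have hup : 2 * u < p := by
    by_contra! h
    have := Nat.mul_le_mul_right q h
    linarith
  obtain ⟨v, rfl⟩ : ∃ v, p = u + v := ⟨p - u, by omega⟩
  rw [Nat.add_sub_cancel_left]
  have hrows : 4 * (T * (N / (4 * T))) ≤ N := by
    rw [← mul_assoc]
    exact Nat.mul_div_le N (4 * T)
  have hblocks : (u + v) * (N / (u + v)) ≤ N := Nat.mul_div_le N (u + v)
  have hB : 9 * T ≤ N / (u + v) := (Nat.le_div_iff_mul_le (by omega)).2 (by linarith)
  have hvu : (v - u) * (9 * T) ≤ (v - u) * (N / (u + v)) := Nat.mul_le_mul_left _ hB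
  obtain ⟨d, rfl⟩ : ∃ d, v = u + d := ⟨v - u, by omega⟩
  rw [Nat.add_sub_cancel_left] at hvu
  linarith

section Points

variable [LinearOrder β] [LinearOrder γ] {S : Finset α} {x : α → β} {y : α → γ}

lemma exists_isTwinPairing_pow_three_le_of_lt (hx : Set.InjOn x S) (hy : Set.InjOn y S)
    (hS : 40000 < #S) :
    ∃ W, IsTwinPairing (pointLT x y) S W ∧ (#S + 1) ^ 3 ≤ 10 ^ 5 * #W ^ 5 := by
  obtain ⟨t, ht, ht'⟩ := exists_lt_le_succ (f := fun t ↦ 10 ^ 5 * t ^ 5) (m := (#S + 1) ^ 3)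
    (by simp) ⟨(#S + 1) ^ 3, (Nat.le_self_pow (by norm_num) _).trans
      (Nat.le_mul_of_pos_left _ (by norm_num))⟩
  have ht50 : 50 ≤ t := by
    by_contra! h
    have h₁ : (t + 1) ^ 5 ≤ 50 ^ 5 := Nat.pow_le_pow_left h 5
    have h₂ : 40001 ^ 3 ≤ (#S + 1) ^ 3 := Nat.pow_le_pow_left (by omega) 3
    omega
  obtain ⟨k, p, hk, hpq, hN⟩ := exists_grid_parameters ht50 ht
  have hp : 0 < p := Nat.pos_of_mul_pos_right (by omega : 0 < p * (k + 1))
  obtain ⟨blk, hblk⟩ := exists_isBucketing hx (Nat.succ_pos (#S / p))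
    (Nat.lt_mul_div_succ _ hp).le
  obtain ⟨row, hrow⟩ := exists_isBucketing hy (Nat.succ_pos (#S / (4 * (t + 1))))
    (Nat.lt_mul_div_succ _ (by omega)).le
  obtain ⟨W, hW, hTW⟩ := exists_isCellPairing_le_card hx hy hblk hrow hk
    fun u ↦ cell_count_lt hpq hN
  exact ⟨W, hW.isTwinPairing,
    ht'.trans (Nat.mul_le_mul_left _ (Nat.pow_le_pow_left hTW 5))⟩

lemma exists_strictMonoOn_comp [Nonempty α] (hx : Set.InjOn x S) :
    ∃ e : ℕ → α, (∀ i < #S, e i ∈ S) ∧ StrictMonoOn (x ∘ e) (Set.Iio #S) := by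
  choose! e heS he using fun i (hi : i < #S) ↦ exists_valueRank_eq hx hi
  refine ⟨e, heS, fun i hi j hj hij ↦ (valueRank_lt_valueRank_iff (heS i hi)).1 ?_⟩
  rwa [he i hi, he j hj]

lemma exists_isTwinPairing_of_strictMonoOn {e : ℕ → α} {t : ℕ} (he : ∀ i < 2 * t, e i ∈ S)
    (hx : StrictMonoOn (x ∘ e) (Set.Iio (2 * t)))
    (hy : StrictMonoOn (y ∘ e) (Set.Iio (2 * t)) ∨ StrictAntiOn (y ∘ e) (Set.Iio (2 * t))) :
    ∃ W, IsTwinPairing (pointLT x y) S W ∧ #W = t := by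
  classical
  have hinj : Set.InjOn e (Set.Iio (2 * t)) := hx.injOn.of_comp
  have hfst {i : ℕ} (hi : i ∈ range t) : i ∈ Set.Iio (2 * t) := by
    simp only [mem_range, Set.mem_Iio] at hi ⊢
    omega
  have hsnd {i : ℕ} (hi : i ∈ range t) : i + t ∈ Set.Iio (2 * t) := by
    simp only [mem_range, Set.mem_Iio] at hi ⊢
    omega
  refine ⟨(range t).image fun i ↦ (e i, e (i + t)), ⟨forall_mem_image.2 fun i hi ↦
    ⟨he i (hfst hi), he _ (hsnd hi)⟩, forall_mem_image.2 fun i hi ↦ forall_mem_image.2 fun j hj ↦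
      twinCompatible_pointLT.2 ⟨?_, ?_, fun hij ↦ ?_⟩⟩, ?_⟩
  · exact (hx.lt_iff_lt (hfst hi) (hfst hj)).trans <|
      (Nat.add_lt_add_iff_right).symm.trans (hx.lt_iff_lt (hsnd hi) (hsnd hj)).symm
  · rcases hy with hy | hy
    · exact (hy.lt_iff_lt (hfst hi) (hfst hj)).trans <|
        (Nat.add_lt_add_iff_right).symm.trans (hy.lt_iff_lt (hsnd hi) (hsnd hj)).symm
    · exact (hy.lt_iff_gt (hfst hi) (hfst hj)).trans <|
        (Nat.add_lt_add_iff_right).symm.trans (hy.lt_iff_gt (hsnd hi) (hsnd hj)).symm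
  · have := hinj (hfst hi) (hsnd hj) hij
    have := mem_range.1 hi
    omega
  · rw [card_image_of_injOn, card_range]
    exact fun i hi j hj h ↦ hinj (hfst hi) (hfst hj) (congrArg Prod.fst h)

lemma exists_isTwinPairing_of_sq_lt_card {k : ℕ} (hx : Set.InjOn x S) (hy : Set.InjOn y S)
    (hk : k ^ 2 < #S) : ∃ W, IsTwinPairing (pointLT x y) S W ∧ #W = (k + 1) / 2 := by
  let r (i : Bool) (a b : α) : Prop := x a < x b ∧ bif i then y a < y b else y b < y a
  have hr (i : Bool) : IsStrictOrder α (r i) :=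
    { irrefl a h := h.1.false
      trans a b c hab hbc := by
        refine ⟨hab.1.trans hbc.1, ?_⟩
        cases i
        exacts [hbc.2.trans hab.2, hab.2.trans hbc.2] }
  have htotal (a) (ha : a ∈ S) (b) (hb : b ∈ S) (hab : a ≠ b) : ∃ i, r i a b ∨ r i b a := by
    have hyab := (hy.ne ha hb hab).lt_or_gt
    simp only [r, Bool.exists_bool, cond_true, cond_false]
    rcases (hx.ne ha hb hab).lt_or_gt with h | h <;> tauto
  obtain ⟨i, C, hCS, hchain, hkC⟩ := exists_isChain_of_pow_card_lt htotal (by simpa using hk)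
  have : Nonempty α := ⟨(card_pos.1 (Nat.zero_lt_of_lt hkC)).choose⟩
  obtain ⟨e, heC, he⟩ := exists_strictMonoOn_comp (hx.mono hCS)
  have hsub : Set.Iio (2 * ((k + 1) / 2)) ⊆ Set.Iio #C := Set.Iio_subset_Iio (by omega)
  have hre {m n : ℕ} (hm : m < #C) (hn : n < #C) (hmn : m < n) : r i (e m) (e n) :=
    (hchain (heC m hm) (heC n hn) fun h ↦ (he hm hn hmn).ne (congrArg x h)).resolve_right
      fun h ↦ h.1.not_gt (he hm hn hmn)
  refine exists_isTwinPairing_of_strictMonoOn (fun m hm ↦ hCS (heC m (hsub hm))) (he.mono hsub) ?_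
  cases i
  · exact .inr fun m hm n hn hmn ↦ (hre (hsub hm) (hsub hn) hmn).2
  · exact .inl fun m hm n hn hmn ↦ (hre (hsub hm) (hsub hn) hmn).2

lemma exists_isTwinPairing_pow_three_le_of_le (hx : Set.InjOn x S) (hy : Set.InjOn y S)
    (hS : 2 ≤ #S) (hS' : #S ≤ 40000) :
    ∃ W, IsTwinPairing (pointLT x y) S W ∧ (#S + 1) ^ 3 ≤ 10 ^ 5 * #W ^ 5 := by
  obtain ⟨k, hk, hk'⟩ := exists_lt_le_succ (f := fun k ↦ k ^ 2) (m := #S)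
    (show 0 ^ 2 < #S by omega) ⟨#S, Nat.le_self_pow two_ne_zero _⟩
  obtain ⟨W, hW, hcard⟩ := exists_isTwinPairing_of_sq_lt_card hx hy hk
  refine ⟨W, hW, ?_⟩
  have hk1 : 1 ≤ k := by
    by_contra! h
    obtain rfl : k = 0 := by omega
    omega
  have hk200 : k < 200 := lt_of_pow_lt_pow_left₀ 2 (by omega) (hk.trans_le hS')
  have hS_le : #S + 1 ≤ 10 * #W ^ 2 := by
    have : k + 1 ≤ 2 * #W + 1 := by omega
    have : 1 ≤ #W := by omega
    nlinarith
  calc (#S + 1) ^ 3 ≤ (10 * #W ^ 2) ^ 3 := Nat.pow_le_pow_left hS_le 3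
    _ = 10 ^ 3 * #W ^ 5 * #W := by ring
    _ ≤ 10 ^ 3 * #W ^ 5 * 100 := Nat.mul_le_mul_left _ (by omega)
    _ = 10 ^ 5 * #W ^ 5 := by ring

lemma exists_isTwinPairing_pointLT (hx : Set.InjOn x S) (hy : Set.InjOn y S) (hS : 2 ≤ #S) :
    ∃ W, IsTwinPairing (pointLT x y) S W ∧ (#S + 1) ^ 3 ≤ 10 ^ 5 * #W ^ 5 :=
  (le_or_gt #S 40000).elim (exists_isTwinPairing_pow_three_le_of_le hx hy hS)
    (exists_isTwinPairing_pow_three_le_of_lt hx hy)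

end Points

/-! ### Bisection -/

section Bisection

variable [LinearOrder β] {g : α → Bool → β} {S A B : Finset α} {W W' : Finset (α × α)}

lemma isTwinPairing_singleton {a b : α} (ha : a ∈ S) (hb : b ∈ S) (hab : a ≠ b)
    (hga : g a false < g a true) (hgb : g b false < g b true) :
    IsTwinPairing (endpointLT g) S {(a, b)} := by
  simp only [IsTwinPairing, mem_singleton, forall_eq]
  refine ⟨⟨ha, hb⟩, fun (s, t) ↦ ?_, hab⟩
  cases s <;> cases t
  exacts [iff_of_false (lt_irrefl _) (lt_irrefl _), iff_of_true hga hgb,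
    iff_of_false hga.not_gt hgb.not_gt, iff_of_false (lt_irrefl _) (lt_irrefl _)]

lemma IsTwinPairing.endpointLT_of_crossing {c : β}
    (hW : IsTwinPairing (pointLT (g · false) (g · true)) S W)
    (hc : ∀ a ∈ S, g a false ≤ c ∧ c < g a true) : IsTwinPairing (endpointLT g) S W := by
  refine ⟨hW.1, fun w hw w' hw' ↦ ?_⟩
  obtain ⟨hfalse, htrue, hne⟩ := twinCompatible_pointLT.1 (hW.2 w hw w' hw')
  have hcross {a b : α} (ha : a ∈ S) (hb : b ∈ S) : g a false < g b true :=
    (hc a ha).1.trans_lt (hc b hb).2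
  obtain ⟨h₁, h₂⟩ := hW.1 w hw
  obtain ⟨h₁', h₂'⟩ := hW.1 w' hw'
  refine ⟨fun (s, t) ↦ ?_, hne⟩
  cases s <;> cases t
  exacts [hfalse, iff_of_true (hcross h₁ h₁') (hcross h₂ h₂'),
    iff_of_false (hcross h₁' h₁).not_gt (hcross h₂' h₂).not_gt, htrue]

lemma exists_isTwinPairing_card_eq_add (hA : A ⊆ S) (hB : B ⊆ S)
    (hAB : ∀ a ∈ A, ∀ b ∈ B, ∀ s t, g a s < g b t) (hW : IsTwinPairing (endpointLT g) A W)
    (hW' : IsTwinPairing (endpointLT g) B W') :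
    ∃ Z, IsTwinPairing (endpointLT g) S Z ∧ #Z = #W + #W' := by
  classical
  have hne {a b : α} (ha : a ∈ A) (hb : b ∈ B) : a ≠ b := fun h ↦
    (hAB a ha b hb false false).ne (h ▸ rfl)
  have hdisj : Disjoint W W' := disjoint_left.2 fun w hw hw' ↦
    hne (hW.1 w hw).1 (hW'.1 w hw').1 rfl
  refine ⟨W ∪ W', (hW.mono hA).union (hW'.mono hB) fun w hw w' hw' ↦ ?_,
    card_union_of_disjoint hdisj⟩
  obtain ⟨h₁, h₂⟩ := hW.1 w hw
  obtain ⟨h₁', h₂'⟩ := hW'.1 w' hw'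
  exact ⟨⟨fun (s, t) ↦ iff_of_true (hAB _ h₁ _ h₁' s t) (hAB _ h₂ _ h₂' s t), hne h₁ h₂'⟩,
    ⟨fun (s, t) ↦ iff_of_false (hAB _ h₁ _ h₁' t s).not_gt (hAB _ h₂ _ h₂' t s).not_gt,
      (hne h₂ h₁').symm⟩⟩

lemma exists_cube_root_bounds {n : ℕ} (hn : 128 < n) :
    ∃ t, 0 < t ∧ 1000 * t < 315 * n ∧ n ^ 3 ≤ 32 * (t + 1) ^ 3 := by
  obtain ⟨t, ht, hts⟩ := exists_lt_le_succ (f := fun t ↦ 32 * t ^ 3) (m := n ^ 3)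
    (show 32 * 0 ^ 3 < n ^ 3 by positivity) ⟨n, Nat.le_mul_of_pos_left _ (by norm_num)⟩
  refine ⟨t, ?_, ?_, hts⟩
  · by_contra! h
    obtain rfl : t = 0 := by omega
    have := Nat.pow_le_pow_left hn.le 3
    omega
  · refine lt_of_pow_lt_pow_left₀ 3 (Nat.zero_le _) ?_
    rw [mul_pow, mul_pow]
    omega

lemma card_le_card_filter_add_crossing (g : α → Bool → β) (S : Finset α) (c : β) :
    #S ≤ #{a ∈ S | g a true ≤ c} + #{a ∈ S | c < g a false} +
      #{a ∈ S | g a false ≤ c ∧ c < g a true} := by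
  classical
  refine (card_le_card fun a ha ↦ ?_).trans <| (card_union_le _ _).trans <|
    Nat.add_le_add_right (card_union_le _ _) _
  simp only [mem_union, mem_filter, ha, true_and, ← not_le]
  tauto

lemma exists_crossing_or_separated (hlt : ∀ a ∈ S, g a false < g a true)
    (hinj : Set.InjOn (g · true) S) (hS : 128 < #S) :
    (∃ c, 37 * #S ≤ 100 * (#{a ∈ S | g a false ≤ c ∧ c < g a true} + 1)) ∨
    ∃ A ⊂ S, ∃ B ⊂ S, ∃ s, 2 ≤ s ∧ s ≤ #A ∧ s ≤ #B ∧ #S ^ 3 ≤ 32 * s ^ 3 ∧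
      ∀ a ∈ A, ∀ b ∈ B, ∀ s t, g a s < g b t := by
  obtain ⟨t, ht_pos, ht_lt, hts⟩ := exists_cube_root_bounds hS
  obtain ⟨c, hc⟩ := exists_card_filter_le_eq hinj (by omega : t < #S)
  set A := {a ∈ S | g a true ≤ c}
  set B := {a ∈ S | c < g a false}
  set X := {a ∈ S | g a false ≤ c ∧ c < g a true}
  classical
  have hAB (a) (ha : a ∈ A) (b) (hb : b ∈ B) (s t : Bool) : g a s < g b t := by
    obtain ⟨haS, hac⟩ := mem_filter.1 ha
    obtain ⟨hbS, hcb⟩ := mem_filter.1 hb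
    calc g a s ≤ g a true := by cases s; exacts [(hlt a haS).le, le_rfl]
      _ ≤ c := hac
      _ < g b false := hcb
      _ ≤ g b t := by cases t; exacts [le_rfl, (hlt b hbS).le]
  have hcard : #S ≤ #A + #B + #X := card_le_card_filter_add_crossing g S c
  rcases lt_or_ge #B (t + 1) with hB | hB
  · exact .inl ⟨c, (by omega : 37 * #S ≤ 100 * (#X + 1))⟩
  · have hdisj : Disjoint A B := disjoint_left.2 fun a haA haB ↦ (hAB a haA a haB true true).false
    have hsum : #A + #B ≤ #S := by
      rw [← card_union_of_disjoint hdisj]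
      exact card_le_card (union_subset (filter_subset _ _) (filter_subset _ _))
    have hAS : #A ≠ #S := by omega
    have hBS : #B ≠ #S := by omega
    exact .inr ⟨A, (filter_subset _ _).ssubset_of_ne (ne_of_apply_ne card hAS),
      B, (filter_subset _ _).ssubset_of_ne (ne_of_apply_ne card hBS),
      t + 1, by omega, hc.ge, hB, hts, hAB⟩

lemma pow_three_le_mul_add_pow_five {K m s u v : ℕ} (hm : m ^ 3 ≤ 32 * s ^ 3)
    (hu : s ^ 3 ≤ K * u ^ 5) (hv : s ^ 3 ≤ K * v ^ 5) : m ^ 3 ≤ K * (u + v) ^ 5 := by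
  wlog huv : u ≤ v generalizing u v
  · rw [add_comm]
    exact this hv hu (by omega)
  calc m ^ 3 ≤ 32 * (K * u ^ 5) := by omega
    _ = K * (u + u) ^ 5 := by ring
    _ ≤ K * (u + v) ^ 5 := by gcongr

lemma exists_isTwinPairing_endpointLT (hlt : ∀ a ∈ S, g a false < g a true)
    (hg : (S : Set α).PairwiseDisjoint (edgeOf g)) (hS : 2 ≤ #S) :
    ∃ W, IsTwinPairing (endpointLT g) S W ∧ #S ^ 3 ≤ 2 ^ 21 * #W ^ 5 := by
  induction S using Finset.strongInduction with | H S ih => ?_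
  have hinj (s : Bool) : Set.InjOn (g · s) S := fun a ha b hb ↦ eq_of_apply_eq_apply hg ha hb
  rcases le_or_gt #S 128 with hS128 | hS128
  · obtain ⟨a, ha, b, hb, hab⟩ := one_lt_card.1 hS
    refine ⟨_, isTwinPairing_singleton ha hb hab (hlt a ha) (hlt b hb), ?_⟩
    rw [card_singleton]
    exact Nat.pow_le_pow_left hS128 3
  rcases exists_crossing_or_separated hlt (hinj true) hS128 with
    ⟨c, hX⟩ | ⟨A, hA, B, hB, s, hs, hsA, hsB, hSs, hAB⟩
  · set X := {a ∈ S | g a false ≤ c ∧ c < g a true}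
    have hXS : X ⊆ S := filter_subset _ _
    obtain ⟨W, hW, hcard⟩ := exists_isTwinPairing_pointLT ((hinj false).mono hXS)
      ((hinj true).mono hXS) (by omega)
    refine ⟨W, (hW.endpointLT_of_crossing fun a ha ↦ (mem_filter.1 ha).2).mono hXS, ?_⟩
    have hX3 := Nat.pow_le_pow_left hX 3
    rw [mul_pow, mul_pow] at hX3
    omega
  · obtain ⟨W, hW, hAW⟩ := ih A hA (fun a ha ↦ hlt a (hA.1 ha)) (hg.subset hA.1) (hs.trans hsA)
    obtain ⟨W', hW', hBW⟩ := ih B hB (fun a ha ↦ hlt a (hB.1 ha)) (hg.subset hB.1) (hs.trans hsB)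
    obtain ⟨Z, hZ, hcard⟩ := exists_isTwinPairing_card_eq_add hA.1 hB.1 hAB hW hW'
    refine ⟨Z, hZ, hcard ▸ pow_three_le_mul_add_pow_five hSs ?_ ?_⟩
    · exact (Nat.pow_le_pow_left hsA 3).trans hAW
    · exact (Nat.pow_le_pow_left hsB 3).trans hBW

end Bisection

lemma bddAbove_setOf_hasTwins (M : Finset (Finset ℕ)) : BddAbove {k | HasTwins M k} :=
  ⟨#M, fun _ ⟨_, _, hM₁, _, _, _, hk, _⟩ ↦ hk ▸ card_le_card hM₁⟩

lemma IsMatching.card_pow_three_le_twinMax {M : Finset (Finset ℕ)} (hM : IsMatching 2 M)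
    (hcard : 2 ≤ #M) : #M ^ 3 ≤ 2 ^ 21 * twinMax M ^ 5 := by
  obtain ⟨g, hg⟩ := hM.exists_endpoints
  have hdisj : (M : Set (Finset ℕ)).PairwiseDisjoint (edgeOf g) := fun e he f hf hef ↦ by
    rw [Function.onFun, (hg e he).2, (hg f hf).2]
    exact hM.2 e he f hf hef
  obtain ⟨W, hW, hMW⟩ := exists_isTwinPairing_endpointLT (fun e he ↦ (hg e he).1) hdisj hcard
  have himage : M.image (edgeOf g) = M :=
    (image_congr fun e he ↦ (hg e he).2).trans image_id
  refine hMW.trans (Nat.mul_le_mul_left _ (Nat.pow_le_pow_left ?_ 5))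
  exact le_csSup (bddAbove_setOf_hasTwins M) (himage ▸ hW.hasTwins hdisj)

lemma exists_isOrderedMatching_twinMax_eq_minTwins (n : ℕ) :
    ∃ M, IsOrderedMatching 2 n M ∧ twinMax M = minTwins 2 n := by
  have ⟨σ⟩ := nonempty_prod_bool_equiv_fin n
  exact Nat.sInf_mem (s := {t | ∃ M, IsOrderedMatching 2 n M ∧ twinMax M = t})
    ⟨_, _, isOrderedMatching_matchingOfEquiv σ, rfl⟩

lemma le_minTwins_two (n : ℕ) (hn : 2 ≤ n) :
    (1 / (16 * (2 : ℝ) ^ ((1 : ℝ) / 5))) * (n : ℝ) ^ ((3 : ℝ) / 5) ≤ (minTwins 2 n : ℝ) := by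
  obtain ⟨M, hM, hMt⟩ := exists_isOrderedMatching_twinMax_eq_minTwins n
  have hpow : n ^ 3 ≤ 2 ^ 21 * minTwins 2 n ^ 5 := by
    rw [← hMt, ← hM.2.1]
    exact hM.1.card_pow_three_le_twinMax (hM.2.1 ▸ hn)
  have hpow' : (n : ℝ) ^ 3 ≤ 2 ^ 21 * (minTwins 2 n : ℝ) ^ 5 := by exact_mod_cast hpow
  have hroot : ((2 : ℝ) ^ ((1 : ℝ) / 5)) ^ 5 = 2 := by
    rw [← Real.rpow_mul_natCast two_pos.le]
    norm_num
  have hn35 : ((n : ℝ) ^ ((3 : ℝ) / 5)) ^ 5 = (n : ℝ) ^ 3 := by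
    rw [← Real.rpow_mul_natCast n.cast_nonneg, ← Real.rpow_natCast]
    norm_num
  refine le_of_pow_le_pow_left₀ (n := 5) (by norm_num) (Nat.cast_nonneg _) ?_
  rw [one_div_mul_eq_div, div_pow, mul_pow, hroot, hn35, div_le_iff₀ (by positivity)]
  linarith

end

/-- For all `n ≥ 2`,
`(1/(16·2^{1/5}))·n^{3/5} ≤ t^(2)(n) ≤ (e/2^{1/3})·n^{2/3}`. -/
theorem graph_case_bounds (n : ℕ) (hn : 2 ≤ n) :
    (1 / (16 * (2 : ℝ) ^ ((1 : ℝ) / 5))) * (n : ℝ) ^ ((3 : ℝ) / 5) ≤ (minTwins 2 n : ℝ) ∧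
    (minTwins 2 n : ℝ) ≤ (Real.exp 1 / (2 : ℝ) ^ ((1 : ℝ) / 3)) * (n : ℝ) ^ ((2 : ℝ) / 3) :=
  ⟨le_minTwins_two n hn, minTwins_two_le n⟩
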